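/- arXiv:2009.09488 — 3 statements merged into one kernel-verified Lean document; each statement's English description precedes it below -/
import Mathlib

section
/- Let K be a positive semiring, let R be a K-relation over a finite set X of attributes and S a K-relation over a finite set Y of attributes. If R[X ∩ Y] ≡ S[X ∩ Y], then the join commutes up to equivalence: R ⋈ S ≡ S ⋈ R. -/
open Finsupp

variable {A : Type*} [DecidableEq A]

/-- An `X`-tuple: a function assigning to each attribute `a ∈ X` an element of its domain. -/
def Tup (dom : A → Type*) (X : Finset A) : Type _ := ∀ a ∈ X, dom a

/-- Projection (restriction) of an `X`-tuple to `Y ⊆ X`. -/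
def restr (dom : A → Type*) {X Y : Finset A} (h : Y ⊆ X) (t : Tup dom X) : Tup dom Y :=
  fun a ha => t a (h ha)

/-- The marginal `R[Y]` of a `K`-relation `R` over `X`, for `Y ⊆ X`. -/
noncomputable def marg {dom : A → Type*} {K : Type*} [AddCommMonoid K] {X Y : Finset A}
    (h : Y ⊆ X) (R : Tup dom X →₀ K) : Tup dom Y →₀ K :=
  Finsupp.mapDomain (restr dom h) R

/-- Equivalence up to normalization of two `K`-relations over the same attribute set. -/
def KEquiv {dom : A → Type*} {K : Type*} [MulZeroClass K] {X : Finset A}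
    (R S : Tup dom X →₀ K) : Prop :=
  ∃ a b : K, a ≠ 0 ∧ b ≠ 0 ∧ ∀ t, a * R t = b * S t

/-- Merge an `X`-tuple and a `Y`-tuple into an `X ∪ Y`-tuple (values from the first argument
on `X`). -/
def merge {dom : A → Type*} {X Y : Finset A} (r : Tup dom X) (s : Tup dom Y) :
    Tup dom (X ∪ Y) :=
  fun a ha => if h : a ∈ X then r a h else s a ((Finset.mem_union.mp ha).resolve_left h)

/-- The correcting factor `c_S(u) = ∏_{v ∈ S[Z]', v ≠ u} S[Z](v)`. -/
noncomputable def cFactor {dom : A → Type*} {K : Type*} [CommSemiring K] {Y Z : Finset A}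
    (h : Z ⊆ Y) (S : Tup dom Y →₀ K) (u : Tup dom Z) : K :=
  haveI := Classical.decEq (Tup dom Z)
  ∏ v ∈ (marg h S).support.erase u, (marg h S) v

/-- The join of a `K`-relation over `X` and a `K`-relation over `Y`:
`(R ⋈ S)(t) = R(t[X])·S(t[Y])·c_S(t[X ∩ Y])`. -/
noncomputable def kjoin {dom : A → Type*} {K : Type*} [CommSemiring K] {X Y : Finset A}
    (R : Tup dom X →₀ K) (S : Tup dom Y →₀ K) : Tup dom (X ∪ Y) →₀ K :=
  haveI := Classical.decEq (Tup dom (X ∪ Y))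
  Finsupp.onFinset ((R.support ×ˢ S.support).image fun p => merge p.1 p.2)
    (fun t => R (restr dom Finset.subset_union_left t) *
      S (restr dom Finset.subset_union_right t) *
      cFactor Finset.inter_subset_right S (restr dom Finset.inter_subset_union t))
    (by
      intro t ht
      have hR : R (restr dom Finset.subset_union_left t) ≠ 0 :=
        left_ne_zero_of_mul (left_ne_zero_of_mul ht)
      have hS : S (restr dom Finset.subset_union_right t) ≠ 0 :=
        right_ne_zero_of_mul (left_ne_zero_of_mul ht)
      refine Finset.mem_image.mpr ⟨(restr dom Finset.subset_union_left t,
        restr dom Finset.subset_union_right t),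
        Finset.mem_product.mpr ⟨Finsupp.mem_support_iff.mpr hR, Finsupp.mem_support_iff.mpr hS⟩,
        ?_⟩
      funext a ha
      by_cases h : a ∈ X <;> simp [merge, restr, h])

/-- Two `K`-relations (over possibly different attribute sets) are consistent if a single
`K`-relation over the union has marginals equivalent to each of them. -/
def Consistent {dom : A → Type*} {K : Type*} [CommSemiring K] {X Y : Finset A}
    (R : Tup dom X →₀ K) (S : Tup dom Y →₀ K) : Prop :=
  ∃ T : Tup dom (X ∪ Y) →₀ K,
    KEquiv (marg Finset.subset_union_left T) R ∧ KEquiv (marg Finset.subset_union_right T) S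

theorem marg_ne_aux {dom : A → Type*} {K : Type*} [CommSemiring K]
    (hplus : ∀ a b : K, a + b = 0 → a = 0 ∧ b = 0) {X Z : Finset A} (h : Z ⊆ X)
    (R : Tup dom X →₀ K) (t : Tup dom X) (h0 : marg h R (restr dom h t) = 0) : R t = 0 := by
  classical
  have e : marg h R (restr dom h t) =
      R t + marg h (R.erase t) (restr dom h t) := by
    conv_lhs => rw [← Finsupp.single_add_erase t R]
    simp [marg, Finsupp.mapDomain_add, Finsupp.mapDomain_single]
  rw [e] at h0
  exact (hplus _ _ h0).1

theorem cFactor_congr_aux {dom : A → Type*} {K : Type*} [CommSemiring K] {X Z Z' W W' : Finset A}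
    (hZ : Z = Z') (h : Z ⊆ X) (h' : Z' ⊆ X) (R : Tup dom X →₀ K)
    (hW : W = W') (k : Z ⊆ W) (k' : Z' ⊆ W') (l : W' ⊆ W) (t : Tup dom W) :
    cFactor h R (restr dom k t) = cFactor h' R (restr dom k' (restr dom l t)) := by
  subst hZ hW
  rfl

theorem cFactor_scale_aux {dom : A → Type*} {K : Type*} [CommSemiring K] [NoZeroDivisors K]
    {X Y Z : Finset A} (h : Z ⊆ X) (h' : Z ⊆ Y) (R : Tup dom X →₀ K) (S : Tup dom Y →₀ K)
    (a b : K) (ha : a ≠ 0) (hb : b ≠ 0) (e : ∀ t, a * marg h R t = b * marg h' S t)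
    (u : Tup dom Z) (hu : marg h R u ≠ 0) :
    a ^ ((marg h R).support.card - 1) * cFactor h R u =
      b ^ ((marg h R).support.card - 1) * cFactor h' S u := by
  classical
  have hs : (marg h R).support = (marg h' S).support := by
    ext v
    rw [Finsupp.mem_support_iff, Finsupp.mem_support_iff]
    have := e v
    constructor
    · intro h1 h2
      rw [h2, mul_zero] at this
      exact (mul_ne_zero ha h1) this
    · intro h1 h2
      rw [h2, mul_zero] at this
      exact (mul_ne_zero hb h1) this.symm
  have hc : ((marg h R).support.erase u).card = (marg h R).support.card - 1 :=
    Finset.card_erase_of_mem (Finsupp.mem_support_iff.mpr hu)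
  have hR : cFactor h R u = ∏ v ∈ (marg h R).support.erase u, (marg h R) v := by
    unfold cFactor
    congr!
  have hS : cFactor h' S u = ∏ v ∈ (marg h R).support.erase u, (marg h' S) v := by
    unfold cFactor
    rw [hs]
  rw [hR, hS, ← hc, ← Finset.prod_const, ← Finset.prod_const, ← Finset.prod_mul_distrib,
    ← Finset.prod_mul_distrib]
  exact Finset.prod_congr rfl fun v _ => e v

theorem marg_eq_aux {dom : A → Type*} {K : Type*} [CommSemiring K] {W W' : Finset A}
    (hW : W = W') (h : W' ⊆ W) (h' : W ⊆ W') (T : Tup dom W →₀ K) (t : Tup dom W') :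
    marg h T t = T (restr dom h' t) := by
  subst hW
  exact DFunLike.congr_fun (Finsupp.mapDomain_id (v := T)) t

/-- If two K-relations have equivalent marginals on their common attributes, then their join
commutes up to equivalence (after the canonical identification of  with ). -/
theorem statement5 {A : Type*} [DecidableEq A] (dom : A → Type*) (K : Type*)
    [CommSemiring K] [Nontrivial K] [NoZeroDivisors K]
    (hplus : ∀ a b : K, a + b = 0 → a = 0 ∧ b = 0)
    (X Y : Finset A) (R : Tup dom X →₀ K) (S : Tup dom Y →₀ K)
    (h : KEquiv (marg (Finset.inter_subset_left : X ∩ Y ⊆ X) R)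
      (marg (Finset.inter_subset_right : X ∩ Y ⊆ Y) S)) :
    KEquiv (kjoin R S) (marg ((Finset.union_comm X Y).le) (kjoin S R)) := by
  obtain ⟨a, b, ha, hb, e⟩ := h
  set n := (marg (Finset.inter_subset_left : X ∩ Y ⊆ X) R).support.card - 1 with hn
  refine ⟨b ^ n, a ^ n, pow_ne_zero _ hb, pow_ne_zero _ ha, fun t => ?_⟩
  rw [marg_eq_aux (Finset.union_comm Y X) _ (Finset.union_comm Y X).le]
  change b ^ n * (R (restr dom Finset.subset_union_left t) *
      S (restr dom Finset.subset_union_right t) *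
      cFactor Finset.inter_subset_right S (restr dom Finset.inter_subset_union t)) =
    a ^ n * (S (restr dom Finset.subset_union_right t) *
      R (restr dom Finset.subset_union_left t) *
      cFactor Finset.inter_subset_right R (restr dom Finset.inter_subset_union
        (restr dom (Finset.union_comm Y X).le t)))
  rw [← cFactor_congr_aux (Finset.inter_comm X Y) Finset.inter_subset_left
    Finset.inter_subset_right R (Finset.union_comm X Y) Finset.inter_subset_union
    Finset.inter_subset_union (Finset.union_comm Y X).le t]
  by_cases h0 : R (restr dom Finset.subset_union_left t) = 0
  · simp [h0]
  · have key := cFactor_scale_aux Finset.inter_subset_left Finset.inter_subset_right R S a b ha hb e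
      (restr dom Finset.inter_subset_union t)
      (fun hz => h0 (marg_ne_aux hplus Finset.inter_subset_left R _ hz))
    rw [← hn] at key
    rw [mul_left_comm, ← key, mul_left_comm (a ^ n)]
    rw [mul_comm (R _) (S _)]
end

section
/- Let R be a probability distribution over a finite set X of attributes and S a probability distribution over a finite set Y of attributes, let Z = X ∩ Y, and suppose R and S are consistent, i.e., there is a probability distribution T over X ∪ Y with T[X] = R and T[Y] = S. Define the probability distribution R ⋈_P S over X ∪ Y by (R ⋈_P S)(t) = R(t[X])·S(t[Y])/S[Z](t[Z]) (with the convention 0/0 = 0). Let W(R,S) be the set of all probability distributions T over X ∪ Y with T[X] = R and T[Y] = S. Then R ⋈_P S belongs to W(R,S), every P ∈ W(R,S) satisfies H(P | Z) ≤ H(R ⋈_P S | Z), and any P ∈ W(R,S) with H(P | Z) = H(R ⋈_P S | Z) equals R ⋈_P S; that is, R ⋈_P S is the unique maximizer of conditional entropy given Z in W(R,S). -/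
open Finsupp

variable {A : Type*} [DecidableEq A]

/-- The probabilistic join: `(R ⋈_P S)(t) = R(t[X])·S(t[Y])/S[Z](t[Z])` with `0/0 = 0`
(division in the nonnegative reals is total, with zero denominator giving `0`). -/
noncomputable def joinP {A : Type*} [DecidableEq A] {dom : A → Type*} {X Y : Finset A}
    (R : Tup dom X →₀ NNReal) (S : Tup dom Y →₀ NNReal) : Tup dom (X ∪ Y) →₀ NNReal :=
  haveI := Classical.decEq (Tup dom (X ∪ Y))
  Finsupp.onFinset ((R.support ×ˢ S.support).image fun p => merge p.1 p.2)
    (fun t => R (restr dom Finset.subset_union_left t) *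
      S (restr dom Finset.subset_union_right t) /
      marg (Finset.inter_subset_right : X ∩ Y ⊆ Y) S (restr dom Finset.inter_subset_union t))
    (by
      intro t ht
      have h1 : R (restr dom Finset.subset_union_left t) *
          S (restr dom Finset.subset_union_right t) ≠ 0 := by
        intro h
        apply ht
        show R _ * S _ / _ = 0
        rw [h, zero_div]
      have hR := left_ne_zero_of_mul h1
      have hS := right_ne_zero_of_mul h1
      refine Finset.mem_image.mpr ⟨(restr dom Finset.subset_union_left t,
        restr dom Finset.subset_union_right t),
        Finset.mem_product.mpr ⟨Finsupp.mem_support_iff.mpr hR,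
          Finsupp.mem_support_iff.mpr hS⟩, ?_⟩
      funext a ha
      by_cases h : a ∈ X <;> simp [merge, restr, h])

/-- Shannon entropy of a finitely supported nonnegative real valued relation. -/
noncomputable def entropy {A : Type*} [DecidableEq A] {dom : A → Type*} {X : Finset A}
    (P : Tup dom X →₀ NNReal) : ℝ :=
  -∑ t ∈ P.support, (P t : ℝ) * Real.logb 2 (P t)


open Classical in
/-- Conditional entropy of a distribution given the attributes in `Z`. -/
noncomputable def condEntropy {A : Type*} [DecidableEq A] {dom : A → Type*} {U Z : Finset A}
    (hZ : Z ⊆ U) (P : Tup dom U →₀ NNReal) : ℝ :=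
  -∑ z ∈ (marg hZ P).support, (marg hZ P z : ℝ) *
    ∑ t ∈ P.support.filter (fun t => restr dom hZ t = z),
      ((P t : ℝ) / (marg hZ P z : ℝ)) * Real.logb 2 ((P t : ℝ) / (marg hZ P z : ℝ))


section Helpers

variable {T U V C : Type*}

lemma aux_marg_pos (c : T → C) (P : T →₀ NNReal) (t : T) (h : P t ≠ 0) :
    Finsupp.mapDomain c P (c t) ≠ 0 := by
  classical
  rw [Finsupp.mapDomain, Finsupp.sum_apply, Finsupp.sum]
  intro h0
  have := (Finset.sum_eq_zero_iff.mp h0) t (Finsupp.mem_support_iff.mpr h)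
  simp at this
  exact h this

open Classical in
lemma aux_marg_apply (c : T → C) (P : T →₀ NNReal) (z : C) :
    Finsupp.mapDomain c P z = ∑ t ∈ P.support.filter (fun t => c t = z), P t := by
  rw [Finsupp.mapDomain, Finsupp.sum_apply, Finsupp.sum, Finset.sum_filter]
  simp [Finsupp.single_apply]

lemma aux_join_marg (f : T → U) (g : T → V) (a : U → C) (b : V → C)
    (hc : ∀ t, a (f t) = b (g t)) (m : U → V → T)
    (hm1 : ∀ x y, a x = b y → f (m x y) = x) (hm2 : ∀ x y, a x = b y → g (m x y) = y)
    (hm3 : ∀ t, m (f t) (g t) = t)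
    (R : U →₀ NNReal) (S : V →₀ NNReal) (M : C →₀ NNReal)
    (hMR : Finsupp.mapDomain a R = M) (hMS : Finsupp.mapDomain b S = M)
    (J : T →₀ NNReal) (hJ : ∀ t, J t = R (f t) * S (g t) / M (a (f t))) :
    Finsupp.mapDomain f J = R := by
  classical
  ext x
  rw [aux_marg_apply]
  by_cases hx : R x = 0
  · rw [hx, Finset.sum_eq_zero]
    intro t ht
    rw [hJ, (Finset.mem_filter.mp ht).2, hx]; simp
  · have hM : M (a x) ≠ 0 := by rw [← hMR]; exact aux_marg_pos a R x hx
    have key : ∑ t ∈ J.support.filter (fun t => f t = x), J t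
        = ∑ y ∈ S.support.filter (fun y => b y = a x), R x * S y / M (a x) := by
      refine Finset.sum_bij' (fun t _ => g t) (fun y _ => m x y) ?_ ?_ ?_ ?_ ?_
      · intro t ht
        simp only [Finset.mem_filter, Finsupp.mem_support_iff] at ht ⊢
        refine ⟨?_, by rw [← hc, ht.2]⟩
        intro h0
        apply ht.1
        rw [hJ, h0]; simp
      · intro y hy
        simp only [Finset.mem_filter, Finsupp.mem_support_iff] at hy ⊢
        refine ⟨?_, hm1 _ _ hy.2.symm⟩
        rw [hJ, hm1 _ _ hy.2.symm, hm2 _ _ hy.2.symm]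
        exact div_ne_zero (mul_ne_zero hx hy.1) hM
      · intro t ht
        have := (Finset.mem_filter.mp ht).2
        rw [← this, hm3]
      · intro y hy
        exact hm2 _ _ (Finset.mem_filter.mp hy).2.symm
      · intro t ht
        rw [hJ, (Finset.mem_filter.mp ht).2]
    rw [key, ← Finset.sum_div, ← Finset.mul_sum, ← aux_marg_apply, hMS]
    field_simp

lemma aux_sum_comp (f : T → U) (P : T →₀ NNReal) (φ : U → ℝ) :
    ∑ t ∈ P.support, (P t : ℝ) * φ (f t)
      = ∑ x ∈ (Finsupp.mapDomain f P).support, (Finsupp.mapDomain f P x : ℝ) * φ x := by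
  have := Finsupp.sum_mapDomain_index (f := f) (s := P)
    (h := fun x (p : NNReal) => (p : ℝ) * φ x) (by simp) (by intros; push_cast; ring)
  exact this.symm

lemma aux_total (f : T → U) (P : T →₀ NNReal) :
    ∑ t ∈ P.support, (P t : ℝ)
      = ∑ x ∈ (Finsupp.mapDomain f P).support, (Finsupp.mapDomain f P x : ℝ) := by
  simpa using aux_sum_comp f P (fun _ => 1)

open Classical in
lemma aux_cond (c : T → C) (P : T →₀ NNReal) :
    ∑ z ∈ (Finsupp.mapDomain c P).support, (Finsupp.mapDomain c P z : ℝ) *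
      ∑ t ∈ P.support.filter (fun t => c t = z),
        ((P t : ℝ) / (Finsupp.mapDomain c P z : ℝ)) *
          Real.logb 2 ((P t : ℝ) / (Finsupp.mapDomain c P z : ℝ))
    = ∑ t ∈ P.support, (P t : ℝ) * Real.logb 2 ((P t : ℝ) / (Finsupp.mapDomain c P (c t) : ℝ)) := by
  rw [← Finset.sum_fiberwise_of_maps_to (s := P.support)
    (t := (Finsupp.mapDomain c P).support) (g := c)]
  · refine Finset.sum_congr rfl fun z hz => ?_
    rw [Finset.mul_sum]
    refine Finset.sum_congr rfl fun t ht => ?_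
    have h2 := (Finset.mem_filter.mp ht).2
    have h3 : (Finsupp.mapDomain c P z : ℝ) ≠ 0 := by
      exact_mod_cast Finsupp.mem_support_iff.mp hz
    rw [h2]
    field_simp
  · intro t ht
    exact Finsupp.mem_support_iff.mpr (aux_marg_pos c P t (Finsupp.mem_support_iff.mp ht))

lemma aux_main (f : T → U) (g : T → V) (c : T → C)
    (R : U →₀ NNReal) (S : V →₀ NNReal) (M : C →₀ NNReal)
    (J : T →₀ NNReal) (hJ : ∀ t, J t = R (f t) * S (g t) / M (c t))
    (hJR : Finsupp.mapDomain f J = R) (hJS : Finsupp.mapDomain g J = S)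
    (hJM : Finsupp.mapDomain c J = M)
    (P : T →₀ NNReal)
    (hPR : Finsupp.mapDomain f P = R) (hPS : Finsupp.mapDomain g P = S)
    (hPM : Finsupp.mapDomain c P = M) :
    (-∑ t ∈ P.support, (P t : ℝ) * Real.logb 2 ((P t : ℝ) / (M (c t) : ℝ))
      ≤ -∑ t ∈ J.support, (J t : ℝ) * Real.logb 2 ((J t : ℝ) / (M (c t) : ℝ))) ∧
    (-∑ t ∈ P.support, (P t : ℝ) * Real.logb 2 ((P t : ℝ) / (M (c t) : ℝ))
      = -∑ t ∈ J.support, (J t : ℝ) * Real.logb 2 ((J t : ℝ) / (M (c t) : ℝ)) → P = J) := by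
  classical
  -- the cross term depends only on the marginals
  have cross : ∀ Q : T →₀ NNReal, Finsupp.mapDomain f Q = R → Finsupp.mapDomain g Q = S →
      Finsupp.mapDomain c Q = M →
      ∑ t ∈ Q.support, (Q t : ℝ) * Real.logb 2 ((J t : ℝ) / (M (c t) : ℝ))
      = ∑ x ∈ R.support, (R x : ℝ) * Real.logb 2 (R x)
        + ∑ y ∈ S.support, (S y : ℝ) * Real.logb 2 (S y)
        - ∑ z ∈ M.support, (M z : ℝ) * (2 * Real.logb 2 (M z)) := by
    intro Q h1 h2 h3
    have e1 := aux_sum_comp f Q (fun x => Real.logb 2 (R x))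
    have e2 := aux_sum_comp g Q (fun x => Real.logb 2 (S x))
    have e3 := aux_sum_comp c Q (fun x => 2 * Real.logb 2 (M x))
    rw [h1] at e1
    rw [h2] at e2
    rw [h3] at e3
    rw [← e1, ← e2, ← e3, ← Finset.sum_add_distrib, ← Finset.sum_sub_distrib]
    refine Finset.sum_congr rfl fun t ht => ?_
    have ht := Finsupp.mem_support_iff.mp ht
    have r0 : (R (f t) : ℝ) ≠ 0 := by
      exact_mod_cast h1 ▸ aux_marg_pos f Q t ht
    have s0 : (S (g t) : ℝ) ≠ 0 := by
      exact_mod_cast h2 ▸ aux_marg_pos g Q t ht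
    have m0 : (M (c t) : ℝ) ≠ 0 := by
      exact_mod_cast h3 ▸ aux_marg_pos c Q t ht
    rw [hJ]
    push_cast
    rw [Real.logb_div (div_ne_zero (mul_ne_zero r0 s0) m0) m0,
      Real.logb_div (mul_ne_zero r0 s0) m0, Real.logb_mul r0 s0]
    ring
  have hsub : P.support ⊆ J.support := by
    intro t ht
    have ht := Finsupp.mem_support_iff.mp ht
    have r0 : R (f t) ≠ 0 := hPR ▸ aux_marg_pos f P t ht
    have s0 : S (g t) ≠ 0 := hPS ▸ aux_marg_pos g P t ht
    have m0 : M (c t) ≠ 0 := hPM ▸ aux_marg_pos c P t ht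
    rw [Finsupp.mem_support_iff, hJ]
    exact div_ne_zero (mul_ne_zero r0 s0) m0
  have hcr := (cross J hJR hJS hJM).trans (cross P hPR hPS hPM).symm
  have ext0 : ∀ φ : T → ℝ, ∑ t ∈ P.support, (P t : ℝ) * φ t = ∑ t ∈ J.support, (P t : ℝ) * φ t := by
    intro φ
    refine Finset.sum_subset hsub fun t _ ht => ?_
    rw [Finsupp.notMem_support_iff.mp ht]; simp
  have tot : ∑ t ∈ J.support, (P t : ℝ) = ∑ t ∈ J.support, (J t : ℝ) := by
    have := ext0 (fun _ => 1)
    simp only [mul_one] at this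
    rw [← this, aux_total c P, aux_total c J, hPM, hJM]
  have l2 : 0 < Real.log 2 := Real.log_pos (by norm_num)
  -- the relative entropy identity
  have kl : Real.log 2 * (∑ t ∈ P.support, (P t : ℝ) * Real.logb 2 ((P t : ℝ) / (M (c t) : ℝ))
      - ∑ t ∈ J.support, (J t : ℝ) * Real.logb 2 ((J t : ℝ) / (M (c t) : ℝ)))
      = ∑ t ∈ J.support, (J t : ℝ) * InformationTheory.klFun ((P t : ℝ) / (J t : ℝ)) := by
    have : ∑ t ∈ J.support, (J t : ℝ) * InformationTheory.klFun ((P t : ℝ) / (J t : ℝ))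
        = ∑ t ∈ J.support, ((P t : ℝ) * Real.log ((P t : ℝ) / (J t : ℝ)) + J t - P t) := by
      refine Finset.sum_congr rfl fun t ht => ?_
      have j0 : (J t : ℝ) ≠ 0 := by exact_mod_cast Finsupp.mem_support_iff.mp ht
      rw [InformationTheory.klFun]
      field_simp
    rw [this, Finset.sum_sub_distrib, Finset.sum_add_distrib, tot, add_sub_cancel_right,
      ← ext0 (fun t => Real.log ((P t : ℝ) / (J t : ℝ))), hcr, ← Finset.sum_sub_distrib,
      Finset.mul_sum]
    refine Finset.sum_congr rfl fun t ht => ?_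
    have j0 : (J t : ℝ) ≠ 0 := by exact_mod_cast Finsupp.mem_support_iff.mp (hsub ht)
    have ht := Finsupp.mem_support_iff.mp ht
    have p0 : (P t : ℝ) ≠ 0 := by exact_mod_cast ht
    have m0 : (M (c t) : ℝ) ≠ 0 := by
      exact_mod_cast hPM ▸ aux_marg_pos c P t ht
    rw [Real.logb, Real.logb, Real.log_div p0 m0, Real.log_div j0 m0, Real.log_div p0 j0]
    field_simp
    ring
  have nn : ∀ t ∈ J.support, 0 ≤ (J t : ℝ) * InformationTheory.klFun ((P t : ℝ) / (J t : ℝ)) :=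
    fun t _ => mul_nonneg (by positivity) (InformationTheory.klFun_nonneg (by positivity))
  refine ⟨?_, ?_⟩
  · have := Finset.sum_nonneg nn
    rw [← kl] at this
    have := nonneg_of_mul_nonneg_right this l2
    linarith
  · intro heq
    have h0 : ∑ t ∈ J.support, (J t : ℝ) * InformationTheory.klFun ((P t : ℝ) / (J t : ℝ)) = 0 := by
      rw [← kl, neg_inj.mp heq, sub_self, mul_zero]
    have h1 := (Finset.sum_eq_zero_iff_of_nonneg nn).mp h0
    ext t
    by_cases ht : t ∈ J.support
    · have j0 : (J t : ℝ) ≠ 0 := by exact_mod_cast Finsupp.mem_support_iff.mp ht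
      have h2 := (mul_eq_zero.mp (h1 t ht)).resolve_left j0
      have h3 := (InformationTheory.klFun_eq_zero_iff (by positivity)).mp h2
      exact (div_eq_one_iff_eq j0).mp h3
    · rw [Finsupp.notMem_support_iff.mp ht, Finsupp.notMem_support_iff.mp (fun h => ht (hsub h))]

end Helpers

lemma aux_marg_marg {A : Type*} [DecidableEq A] {dom : A → Type*} {X Y Z : Finset A}
    (h : Y ⊆ X) (h' : Z ⊆ Y) (h'' : Z ⊆ X) (P : Tup dom X →₀ NNReal) :
    marg h' (marg h P) = marg h'' P := by
  unfold marg
  rw [← Finsupp.mapDomain_comp]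
  rfl

lemma aux_condEntropy {A : Type*} [DecidableEq A] {dom : A → Type*} {U Z : Finset A}
    (hZ : Z ⊆ U) (P : Tup dom U →₀ NNReal) :
    condEntropy hZ P = -∑ t ∈ P.support,
      (P t : ℝ) * Real.logb 2 ((P t : ℝ) / (marg hZ P (restr dom hZ t) : ℝ)) := by
  rw [condEntropy]
  exact congrArg Neg.neg (aux_cond (restr dom hZ) P)

/-- For consistent probability distributions, the probabilistic join is the unique maximizer
of conditional entropy given the common attributes, among all probability distributions
witnessing the consistency. -/
theorem statement8 {A : Type*} [DecidableEq A] (dom : A → Type*)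
    (X Y : Finset A) (R : Tup dom X →₀ NNReal) (S : Tup dom Y →₀ NNReal)
    (hR : ∑ t ∈ R.support, R t = 1) (hS : ∑ t ∈ S.support, S t = 1)
    (hcons : ∃ T : Tup dom (X ∪ Y) →₀ NNReal, (∑ t ∈ T.support, T t = 1) ∧
      marg Finset.subset_union_left T = R ∧ marg Finset.subset_union_right T = S) :
    ((∑ t ∈ (joinP R S).support, joinP R S t = 1) ∧
      marg Finset.subset_union_left (joinP R S) = R ∧
      marg Finset.subset_union_right (joinP R S) = S) ∧
    (∀ P : Tup dom (X ∪ Y) →₀ NNReal, (∑ t ∈ P.support, P t = 1) →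
      marg Finset.subset_union_left P = R → marg Finset.subset_union_right P = S →
      condEntropy (Finset.inter_subset_union : X ∩ Y ⊆ X ∪ Y) P ≤
        condEntropy Finset.inter_subset_union (joinP R S)) ∧
    (∀ P : Tup dom (X ∪ Y) →₀ NNReal, (∑ t ∈ P.support, P t = 1) →
      marg Finset.subset_union_left P = R → marg Finset.subset_union_right P = S →
      condEntropy (Finset.inter_subset_union : X ∩ Y ⊆ X ∪ Y) P =
        condEntropy Finset.inter_subset_union (joinP R S) → P = joinP R S) := by
  classical
  obtain ⟨Q, hQ, hQR, hQS⟩ := hcons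
  have hMR : marg (Finset.inter_subset_left : X ∩ Y ⊆ X) R
      = marg (Finset.inter_subset_right : X ∩ Y ⊆ Y) S := by
    rw [← hQR, ← hQS, aux_marg_marg _ _ Finset.inter_subset_union,
      aux_marg_marg _ _ Finset.inter_subset_union]
  have hm1 : ∀ (x : Tup dom X) (y : Tup dom Y),
      restr dom (Finset.subset_union_left : X ⊆ X ∪ Y) (merge x y) = x := by
    intro x y
    funext a ha
    simp [restr, merge, ha]
  have hm2 : ∀ (x : Tup dom X) (y : Tup dom Y),
      restr dom (Finset.inter_subset_left : X ∩ Y ⊆ X) x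
        = restr dom (Finset.inter_subset_right : X ∩ Y ⊆ Y) y →
      restr dom (Finset.subset_union_right : Y ⊆ X ∪ Y) (merge x y) = y := by
    intro x y h
    funext a ha
    by_cases hx : a ∈ X
    · have := congrFun (congrFun h a) (Finset.mem_inter.mpr ⟨hx, ha⟩)
      simpa [restr, merge, hx] using this
    · simp [restr, merge, hx]
  have hm3 : ∀ t : Tup dom (X ∪ Y), merge (restr dom (Finset.subset_union_left : X ⊆ X ∪ Y) t)
      (restr dom (Finset.subset_union_right : Y ⊆ X ∪ Y) t) = t := by
    intro t
    funext a ha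
    by_cases h : a ∈ X <;> simp [merge, restr, h]
  have hJ : ∀ t, joinP R S t = R (restr dom Finset.subset_union_left t) *
      S (restr dom Finset.subset_union_right t) /
      marg (Finset.inter_subset_right : X ∩ Y ⊆ Y) S (restr dom Finset.inter_subset_union t) :=
    fun t => rfl
  have hJR : marg Finset.subset_union_left (joinP R S) = R :=
    aux_join_marg _ (restr dom Finset.subset_union_right)
      (restr dom (Finset.inter_subset_left : X ∩ Y ⊆ X))
      (restr dom (Finset.inter_subset_right : X ∩ Y ⊆ Y)) (fun _ => rfl) merge
      (fun x y _ => hm1 x y) hm2 hm3 R S _ hMR rfl _ hJ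
  have hJS : marg Finset.subset_union_right (joinP R S) = S :=
    aux_join_marg _ (restr dom Finset.subset_union_left)
      (restr dom (Finset.inter_subset_right : X ∩ Y ⊆ Y))
      (restr dom (Finset.inter_subset_left : X ∩ Y ⊆ X)) (fun _ => rfl) (fun y x => merge x y)
      (fun y x h => hm2 x y h.symm) (fun y x _ => hm1 x y) hm3 S R _ rfl hMR _
      (fun t => by rw [hJ, mul_comm (R _)]; rfl)
  have hM : ∀ P : Tup dom (X ∪ Y) →₀ NNReal, marg Finset.subset_union_right P = S →
      marg (Finset.inter_subset_union : X ∩ Y ⊆ X ∪ Y) P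
        = marg (Finset.inter_subset_right : X ∩ Y ⊆ Y) S := by
    intro P h
    rw [← h, aux_marg_marg]
  have key := fun (P : Tup dom (X ∪ Y) →₀ NNReal) h1 h2 =>
    aux_main (restr dom Finset.subset_union_left) (restr dom Finset.subset_union_right)
      (restr dom Finset.inter_subset_union) R S _ (joinP R S) hJ hJR hJS (hM _ hJS) P h1 h2
      (hM P h2)
  refine ⟨⟨?_, hJR, hJS⟩, ?_, ?_⟩
  · have h := aux_total (restr dom (Finset.subset_union_left : X ⊆ X ∪ Y)) (joinP R S)
    change _ = ∑ x ∈ (marg _ (joinP R S)).support, ((marg _ (joinP R S) x : NNReal) : ℝ) at h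
    rw [hJR] at h
    have h' : ∑ t ∈ (joinP R S).support, joinP R S t = ∑ x ∈ R.support, R x := by
      exact_mod_cast h
    rw [h', hR]
  · intro P _ h1 h2
    rw [aux_condEntropy, aux_condEntropy, hM P h2, hM _ hJS]
    exact (key P h1 h2).1
  · intro P _ h1 h2
    rw [aux_condEntropy, aux_condEntropy, hM P h2, hM _ hJS]
    exact (key P h1 h2).2
end

section
/- Let K be a positive semiring, let U be a finite set of attributes, let X and Y be subsets of U with X ∪ Y = U, and let P be a K-relation over U. If the support P' of P satisfies the functional dependency X ∩ Y → X ∖ Y or P' satisfies the functional dependency X ∩ Y → Y ∖ X, then the decomposition of P along X and Y is lossless-join, i.e., P ≡ P[X] ⋈ P[Y]. -/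
open Finsupp

variable {A : Type*} [DecidableEq A]

/-- Two tuples over `U` agree on all attributes in `V`. -/
def agreeOn {A : Type*} [DecidableEq A] {dom : A → Type*} {U : Finset A} (V : Finset A)
    (t₁ t₂ : Tup dom U) : Prop :=
  ∀ a (ha : a ∈ U), a ∈ V → t₁ a ha = t₂ a ha

/-- An ordinary relation (a set of `U`-tuples) satisfies the functional dependency `V → W`
if any two of its tuples that agree on `V` also agree on `W`. -/
def SatisfiesFD {A : Type*} [DecidableEq A] {dom : A → Type*} {U : Finset A}
    (P : Finset (Tup dom U)) (V W : Finset A) : Prop :=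
  ∀ t₁ ∈ P, ∀ t₂ ∈ P, agreeOn V t₁ t₂ → agreeOn W t₁ t₂


theorem marg_eq_sum {A : Type*} [DecidableEq A] {dom : A → Type*} {K : Type*} [AddCommMonoid K]
    {X Y : Finset A} (h : Y ⊆ X) (R : Tup dom X →₀ K) (u : Tup dom Y) :
    marg h R u = open Classical in ∑ r ∈ R.support, if restr dom h r = u then R r else 0 := by
  classical
  unfold marg Finsupp.mapDomain Finsupp.sum
  rw [Finsupp.finsetSum_apply]
  refine Finset.sum_congr rfl fun r _ => ?_
  rw [Finsupp.single_apply]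

theorem marg_marg {A : Type*} [DecidableEq A] {dom : A → Type*} {K : Type*} [AddCommMonoid K]
    {X Y Z : Finset A} (h : Y ⊆ X) (h2 : Z ⊆ Y) (R : Tup dom X →₀ K) :
    marg h2 (marg h R) = marg (h2.trans h) R := by
  unfold marg
  rw [← Finsupp.mapDomain_comp]
  rfl

theorem exists_of_marg_ne {A : Type*} [DecidableEq A] {dom : A → Type*} {K : Type*}
    [AddCommMonoid K] {X Y : Finset A} (h : Y ⊆ X) (R : Tup dom X →₀ K) (u : Tup dom Y)
    (hu : marg h R u ≠ 0) : ∃ r ∈ R.support, restr dom h r = u := by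
  classical
  rw [marg_eq_sum] at hu
  obtain ⟨r, hr, hr2⟩ := Finset.exists_ne_zero_of_sum_ne_zero hu
  refine ⟨r, hr, ?_⟩
  by_contra hc
  exact hr2 (if_neg hc)

theorem sum_zero_of_pos {K ι : Type*} [AddCommMonoid K]
    (hplus : ∀ a b : K, a + b = 0 → a = 0 ∧ b = 0) (s : Finset ι) (f : ι → K)
    (h : ∑ i ∈ s, f i = 0) : ∀ i ∈ s, f i = 0 := by
  classical
  intro i hi
  rw [← Finset.add_sum_erase s f hi] at h
  exact (hplus _ _ h).1

theorem marg_ne {A : Type*} [DecidableEq A] {dom : A → Type*} {K : Type*}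
    [AddCommMonoid K] (hplus : ∀ a b : K, a + b = 0 → a = 0 ∧ b = 0)
    {X Y : Finset A} (h : Y ⊆ X) (R : Tup dom X →₀ K) (t : Tup dom X)
    (ht : R t ≠ 0) : marg h R (restr dom h t) ≠ 0 := by
  classical
  intro h0
  rw [marg_eq_sum] at h0
  have := sum_zero_of_pos hplus _ _ h0 t (Finsupp.mem_support_iff.mpr ht)
  rw [if_pos rfl] at this
  exact ht this

theorem marg_congr {A : Type*} [DecidableEq A] {dom : A → Type*} {K : Type*}
    [AddCommMonoid K] {X Y Z : Finset A} (h : Y ⊆ X) (h2 : Z ⊆ X) (R : Tup dom X →₀ K)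
    (t : Tup dom X)
    (hh : ∀ r ∈ R.support, restr dom h r = restr dom h t ↔ restr dom h2 r = restr dom h2 t) :
    marg h R (restr dom h t) = marg h2 R (restr dom h2 t) := by
  classical
  rw [marg_eq_sum, marg_eq_sum]
  refine Finset.sum_congr rfl fun r hr => ?_
  simp only [hh r hr]

theorem marg_inj {A : Type*} [DecidableEq A] {dom : A → Type*} {K : Type*}
    [AddCommMonoid K] {X Y : Finset A} (h : Y ⊆ X) (R : Tup dom X →₀ K)
    (t : Tup dom X) (ht : R t ≠ 0)
    (hh : ∀ r ∈ R.support, restr dom h r = restr dom h t → r = t) :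
    marg h R (restr dom h t) = R t := by
  classical
  rw [marg_eq_sum, Finset.sum_eq_single t]
  · rw [if_pos rfl]
  · intro r hr hne
    exact if_neg fun hc => hne (hh r hr hc)
  · intro hn
    exact absurd (Finsupp.mem_support_iff.mpr ht) hn

theorem restr_eq_iff {A : Type*} [DecidableEq A] {dom : A → Type*} {X Y : Finset A} (h : Y ⊆ X)
    (r t : Tup dom X) : restr dom h r = restr dom h t ↔ agreeOn Y r t := by
  constructor
  · intro e a ha hy
    exact congrFun (congrFun e a) hy
  · intro e
    funext a ha
    exact e a (h ha) ha

theorem agree_union {A : Type*} [DecidableEq A] {dom : A → Type*} {X Y : Finset A}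
    (r t : Tup dom (X ∪ Y)) (hx : agreeOn X r t) (hy : agreeOn Y r t) : r = t := by
  funext a ha
  rcases Finset.mem_union.mp ha with h | h
  · exact hx a ha h
  · exact hy a ha h

theorem agree_mono {A : Type*} [DecidableEq A] {dom : A → Type*} {U V W : Finset A}
    (h : V ⊆ W) {r t : Tup dom U} (hx : agreeOn W r t) : agreeOn V r t :=
  fun a ha hv => hx a ha (h hv)

theorem agree_symm {A : Type*} [DecidableEq A] {dom : A → Type*} {U V : Finset A}
    {r t : Tup dom U} (hx : agreeOn V r t) : agreeOn V t r :=
  fun a ha hv => (hx a ha hv).symm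

theorem agree_trans {A : Type*} [DecidableEq A] {dom : A → Type*} {U V : Finset A}
    {r s t : Tup dom U} (h1 : agreeOn V r s) (h2 : agreeOn V s t) : agreeOn V r t :=
  fun a ha hv => (h1 a ha hv).trans (h2 a ha hv)

/-- The product of the two marginals, under either functional dependency. -/
theorem marg_prod {A : Type*} [DecidableEq A] {dom : A → Type*} {K : Type*} [CommSemiring K]
    {X Y : Finset A} (P : Tup dom (X ∪ Y) →₀ K)
    (hfd : SatisfiesFD P.support (X ∩ Y) X ∨ SatisfiesFD P.support (X ∩ Y) Y)
    (t : Tup dom (X ∪ Y)) :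
    (P t ≠ 0 → marg Finset.subset_union_left P (restr dom Finset.subset_union_left t) *
      marg Finset.subset_union_right P (restr dom Finset.subset_union_right t) =
      marg Finset.inter_subset_union P (restr dom Finset.inter_subset_union t) * P t) ∧
    (P t = 0 → marg Finset.subset_union_left P (restr dom Finset.subset_union_left t) *
      marg Finset.subset_union_right P (restr dom Finset.subset_union_right t) = 0) := by
  constructor
  · intro ht
    have htm := Finsupp.mem_support_iff.mpr ht
    rcases hfd with hfd | hfd
    · rw [marg_congr Finset.subset_union_left Finset.inter_subset_union P t,
        marg_inj Finset.subset_union_right P t ht]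
      · intro r hr e
        rw [restr_eq_iff] at e
        exact agree_union r t (hfd r hr t htm (agree_mono Finset.inter_subset_right e)) e
      · intro r hr
        rw [restr_eq_iff, restr_eq_iff]
        exact ⟨agree_mono Finset.inter_subset_left, hfd r hr t htm⟩
    · rw [marg_congr Finset.subset_union_right Finset.inter_subset_union P t,
        marg_inj Finset.subset_union_left P t ht, mul_comm]
      · intro r hr e
        rw [restr_eq_iff] at e
        exact agree_union r t e (hfd r hr t htm (agree_mono Finset.inter_subset_left e))
      · intro r hr
        rw [restr_eq_iff, restr_eq_iff]
        exact ⟨agree_mono Finset.inter_subset_right, hfd r hr t htm⟩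
  · intro ht
    by_contra hne
    obtain ⟨r, hr, er⟩ := exists_of_marg_ne _ _ _ (left_ne_zero_of_mul hne)
    obtain ⟨s, hs, es⟩ := exists_of_marg_ne _ _ _ (right_ne_zero_of_mul hne)
    rw [restr_eq_iff] at er es
    have hrs : agreeOn (X ∩ Y) r s := agree_trans (agree_mono Finset.inter_subset_left er)
      (agree_symm (agree_mono Finset.inter_subset_right es))
    rcases hfd with hfd | hfd
    · have := agree_union s t (agree_trans (agree_symm (hfd r hr s hs hrs)) er) es
      subst this
      exact Finsupp.mem_support_iff.mp hs ht
    · have := agree_union r t er (agree_trans (hfd r hr s hs hrs) es)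
      subst this
      exact Finsupp.mem_support_iff.mp hr ht

/-- Lossless-join decompositions of K-relations: if the support of a K-relation over
`U = X ∪ Y` satisfies one of the two functional dependencies, then the K-relation is
equivalent to the join of its marginals on `X` and on `Y`. -/
theorem statement10 {A : Type*} [DecidableEq A] (dom : A → Type*) (K : Type*)
    [CommSemiring K] [Nontrivial K] [NoZeroDivisors K]
    (hplus : ∀ a b : K, a + b = 0 → a = 0 ∧ b = 0)
    (X Y : Finset A) (P : Tup dom (X ∪ Y) →₀ K)
    (hfd : SatisfiesFD P.support (X ∩ Y) (X \ Y) ∨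
           SatisfiesFD P.support (X ∩ Y) (Y \ X)) :
    KEquiv P (kjoin (marg Finset.subset_union_left P) (marg Finset.subset_union_right P)) := by
  classical
  have hfd' : SatisfiesFD P.support (X ∩ Y) X ∨ SatisfiesFD P.support (X ∩ Y) Y := by
    refine hfd.imp (fun h r hr s hs e a ha hx => ?_) (fun h r hr s hs e a ha hx => ?_)
    · by_cases hy : a ∈ Y
      · exact e a ha (Finset.mem_inter.mpr ⟨hx, hy⟩)
      · exact h r hr s hs e a ha (Finset.mem_sdiff.mpr ⟨hx, hy⟩)
    · by_cases hy : a ∈ X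
      · exact e a ha (Finset.mem_inter.mpr ⟨hy, hx⟩)
      · exact h r hr s hs e a ha (Finset.mem_sdiff.mpr ⟨hx, hy⟩)
  refine ⟨∏ v ∈ (marg (Finset.inter_subset_union (s := X) (t := Y)) P).support,
    marg Finset.inter_subset_union P v, 1, ?_, one_ne_zero, fun t => ?_⟩
  · exact Finset.prod_ne_zero_iff.mpr fun v hv => Finsupp.mem_support_iff.mp hv
  · have key := marg_prod P hfd' t
    rw [one_mul]
    unfold kjoin
    rw [Finsupp.onFinset_apply]
    unfold cFactor
    rw [marg_marg]
    by_cases ht : P t = 0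
    · rw [key.2 ht, ht, mul_zero, zero_mul]
    · rw [key.1 ht]
      have hm := marg_ne hplus (Finset.inter_subset_union (s := X) (t := Y)) P t ht
      rw [← Finset.mul_prod_erase _ _ (Finsupp.mem_support_iff.mpr hm), mul_right_comm]
end
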